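/- Let Ψ be either the class of all forests or the class of all bipartite graphs, let α, β be reals with 2 < α ≤ 3 and 4α − β = 6, and let G be a minimal counterexample for Ψ, α, β. Let U be the set of vertices of G of degree exactly 4, and suppose the induced subgraph G[U] is a disjoint union of isolated vertices and single edges (maximum degree at most 1). If the induced subgraph G[V(G)∖U] has an independent cut, then G has a forest cut. -/

import Mathlib

/-!
The argument assumes that `G` has no forest cut.

Forests are handled as 1-degenerate graphs (`Degen`, `isAcyclic_induce_iff`). Minimality enters
through edge counting (`exists_sep`): deleting a set of `k` vertices that destroys at least `3 k + m`
edges, and then adding `m` edges, does not lower the quality because `α ≤ 3`, so the smaller graph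
has a `Ψ`-cut. Extending such a cut to `G` gives the local structure of `G`:

* `G` has at least 6 vertices and minimum degree at least 4 (`six_le_card`, `four_le_vdeg`);
* the neighbourhood of a vertex of degree 4 contains a triangle (`exists_triangle`), as it is
  a cut and therefore no forest, and an induced 4-cycle can be reduced to one of its diagonals;
* if two adjacent degree-4 vertices `u`, `w` lie in a `K₄` with `a`, `b`, where `b` has degree above
  4, then `b` is adjacent to the fourth neighbour of `u` or of `w` (`false_of_twin_K4`).

Now let `U` be the set of degree-4 vertices and let the independent set `M` separate `L` from `R`
in `G - U`. The vertices of `U` are distributed as follows: those without neighbour in `L` go to the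
side `R`; of the others, those with a neighbour in `R` or with a partner in `U` that went to `R` join
the cut, and the rest go to the side `L`. This is a separation of `G`. Each vertex `u ∈ U` in the
enlarged cut has at most one neighbour there: if the triangle in its neighbourhood avoids `U`, it
lies in `M ∪ L` or `M ∪ R` and meets `M` at most once (`leaf_of_no_K4`); if it contains the
partner of `u`, a second neighbour in the cut would give the forbidden `K₄` configuration
(`leaf_of_K4`). So the enlarged cut is an independent set with leaves attached and isolated edges
added, hence a forest (`degen_of_leaves`, `false_of_cutPart`).
-/

open SimpleGraph

/-- `M` is a vertex cut of `G`: the complement of `M` can be partitioned into two nonempty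
sets `L`, `R` with no edge of `G` joining a vertex of `L` to a vertex of `R`. -/
def IsVertexCut {V : Type*} (G : SimpleGraph V) (M : Set V) : Prop :=
  ∃ L R : Set V, L.Nonempty ∧ R.Nonempty ∧ Disjoint L R ∧ L ∪ R = Mᶜ ∧
    ∀ x ∈ L, ∀ y ∈ R, ¬ G.Adj x y

/-- `(M, L, R)` is a separation of `G`. -/
def IsSeparation {V : Type*} (G : SimpleGraph V) (M L R : Set V) : Prop :=
  L.Nonempty ∧ R.Nonempty ∧ M ∪ L ∪ R = Set.univ ∧
  Disjoint M L ∧ Disjoint M R ∧ Disjoint L R ∧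
  ∀ x ∈ L, ∀ y ∈ R, ¬ G.Adj x y

/-- The quality function `q_{α,β}(G) = α|V(G)| − |E(G)| − β`. -/
noncomputable def quality {V : Type*} (α β : ℝ) (G : SimpleGraph V) : ℝ :=
  α * Nat.card V - Nat.card G.edgeSet - β

/-- degree of a vertex as the cardinality of its neighbor set. -/
noncomputable def vdeg {V : Type*} (G : SimpleGraph V) (v : V) : ℕ :=
  (G.neighborSet v).ncard

/-- The class of forests. -/
def ForestClass : ∀ (W : Type), SimpleGraph W → Prop := fun _ H => H.IsAcyclic

/-- The class of bipartite graphs. -/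
def BipartiteClass : ∀ (W : Type), SimpleGraph W → Prop := fun _ H => H.Colorable 2

/-- `G` has a `Ψ`-cut: a vertex cut whose induced subgraph lies in `Ψ`. -/
def HasPsiCut (Ψ : ∀ (W : Type), SimpleGraph W → Prop) {V : Type} (G : SimpleGraph V) : Prop :=
  ∃ M : Set V, IsVertexCut G M ∧ Ψ ↥M (G.induce M)

/-- `G` has a forest cut. -/
def HasForestCut {V : Type*} (G : SimpleGraph V) : Prop :=
  ∃ M : Set V, IsVertexCut G M ∧ (G.induce M).IsAcyclic

/-- `G` has a bipartite cut. -/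
def HasBipartiteCut {V : Type*} (G : SimpleGraph V) : Prop :=
  ∃ M : Set V, IsVertexCut G M ∧ (G.induce M).Colorable 2

/-- `G` has an independent cut. -/
def HasIndependentCut {V : Type*} (G : SimpleGraph V) : Prop :=
  ∃ M : Set V, IsVertexCut G M ∧ ∀ x ∈ M, ∀ y ∈ M, ¬ G.Adj x y

/-- `G` is a minimal counterexample for the class `Ψ` and parameters `α`, `β`. -/
def MinCounterexample (Ψ : ∀ (W : Type), SimpleGraph W → Prop) (α β : ℝ)
    {V : Type} (G : SimpleGraph V) : Prop :=
  4 ≤ Nat.card V ∧ 0 < quality α β G ∧ ¬ HasPsiCut Ψ G ∧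
  ∀ (W : Type) (H : SimpleGraph W),
    4 ≤ Nat.card W → Nat.card W < Nat.card V → 0 < quality α β H → HasPsiCut Ψ H

/-- `T0`: a triangle together with an isolated vertex. -/
def graphT0 : SimpleGraph (Fin 4) := SimpleGraph.fromEdgeSet {s(0,1), s(0,2), s(1,2)}

/-- `T1`: a triangle with an extra vertex joined to exactly one triangle vertex. -/
def graphT1 : SimpleGraph (Fin 4) := SimpleGraph.fromEdgeSet {s(0,1), s(0,2), s(1,2), s(2,3)}

/-- The diamond graph `K4` minus one edge. -/
def diamondGraph : SimpleGraph (Fin 4) := (⊤ : SimpleGraph (Fin 4)).deleteEdges {s(0,1)}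

/-- Number of edges of `G` with one endpoint in `X` and the other outside `X`. -/
noncomputable def crossEdges {V : Type*} (G : SimpleGraph V) (X : Set V) : ℕ :=
  {e : Sym2 V | e ∈ G.edgeSet ∧ ∃ x ∈ X, ∃ y ∉ X, e = s(x,y)}.ncard

/-! ### Induced forests and the classes `Ψ` -/

/-- `S` induces a 1-degenerate subgraph of `G`: every nonempty subset of `S` contains a vertex with
at most one neighbour in that subset. For finite graphs this is the same as `G[S]` being a forest
(`isAcyclic_induce_iff`), and it avoids handling walks. -/
def Degen {V : Type*} (G : SimpleGraph V) (S : Set V) : Prop :=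
  ∀ T ⊆ S, T.Nonempty → ∃ v ∈ T, ∃ z, ∀ y ∈ T, G.Adj v y → y = z

lemma isAcyclic_induce_iff {V : Type*} [Finite V] (G : SimpleGraph V) (S : Set V) :
    (G.induce S).IsAcyclic ↔ Degen G S := by
  classical
  constructor
  · intro h T hT hne
    have hTa : (G.induce T).IsAcyclic :=
      h.comap (G' := G.induce S) ⟨fun x => ⟨x.1, hT x.2⟩, fun hxy => hxy⟩
        (fun x y hxy => Subtype.ext (congrArg (fun z : S => z.1) hxy))
    have : Nonempty T := hne.to_subtype
    -- An endpoint of a longest path has all its neighbours on the path, hence at most one.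
    obtain ⟨u, v, p, hp, hmax⟩ := Walk.exists_isPath_forall_isPath_length_le_length (G.induce T)
    refine ⟨u, u.2, p.snd, fun y hy hadj => ?_⟩
    have hadj' : (G.induce T).Adj u ⟨y, hy⟩ := hadj
    by_cases hmem : (⟨y, hy⟩ : T) ∈ p.support
    · exact congrArg Subtype.val (hTa.eq_snd_of_adj_start hp hadj' hmem)
    · have := hmax _ _ (Walk.cons hadj'.symm p) (hp.cons hmem)
      simp at this
  · intro h v c hc
    obtain ⟨w, hw, z, hz⟩ := h (Subtype.val '' {x | x ∈ c.support})
      (by rintro _ ⟨x, -, rfl⟩; exact x.2) ⟨v, v, by simp, rfl⟩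
    obtain ⟨w, hw, rfl⟩ := hw
    have h2 := hc.ncard_neighborSet_toSubgraph_eq_two hw
    obtain ⟨a, b, hab, hs⟩ := Set.ncard_eq_two.1 h2
    have key : ∀ x ∈ c.toSubgraph.neighborSet w, (x : V) = z := by
      intro x hx
      have hx' : c.toSubgraph.Adj w x := hx
      refine hz _ ⟨x, ?_, rfl⟩ hx'.adj_sub
      simpa using c.toSubgraph.edge_vert hx'.symm
    exact hab (Subtype.ext ((key a (by simp [hs])).trans (key b (by simp [hs])).symm))

lemma Degen.mono {V : Type*} {G F : SimpleGraph V} {S : Set V} (h : Degen F S)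
    (hGF : ∀ x ∈ S, ∀ y ∈ S, G.Adj x y → F.Adj x y) : Degen G S := by
  intro T hT hne
  obtain ⟨v, hv, z, hz⟩ := h T hT hne
  exact ⟨v, hv, z, fun y hy hadj => hz y hy (hGF v (hT hv) y (hT hy) hadj)⟩

/-- A set of at most four vertices that does not induce a forest contains a triangle or a
spanning 4-cycle. -/
lemma triangle_or_square {V : Type*} [Finite V] {G : SimpleGraph V} {S : Set V}
    (hS : S.ncard ≤ 4) (h : ¬ Degen G S) :
    (∃ p ∈ S, ∃ q ∈ S, ∃ r ∈ S, G.Adj p q ∧ G.Adj p r ∧ G.Adj q r) ∨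
    (∃ a b c d, S = {a, b, c, d} ∧ S.ncard = 4 ∧ a ≠ c ∧ b ≠ d ∧
      G.Adj a b ∧ G.Adj b c ∧ G.Adj c d ∧ G.Adj d a) := by
  unfold Degen at h
  push Not at h
  obtain ⟨T, hTS, ⟨p, hp⟩, hT⟩ := h
  have two : ∀ v ∈ T, ∀ z, ∃ y ∈ T, G.Adj v y ∧ y ≠ z := hT
  by_cases htri : ∃ p ∈ S, ∃ q ∈ S, ∃ r ∈ S, G.Adj p q ∧ G.Adj p r ∧ G.Adj q r
  · exact Or.inl htri
  have nt : ∀ p ∈ T, ∀ q ∈ T, ∀ r ∈ T, G.Adj p q → G.Adj p r → ¬ G.Adj q r :=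
    fun p hp q hq r hr h1 h2 h3 =>
      htri ⟨p, hTS hp, q, hTS hq, r, hTS hr, h1, h2, h3⟩
  obtain ⟨q, hq, hpq, -⟩ := two p hp p
  obtain ⟨r, hr, hpr, hrq⟩ := two p hp q
  obtain ⟨s, hs, hqs, hsp⟩ := two q hq p
  have hrs : r ≠ s := by rintro rfl; exact nt p hp q hq r hr hpq hpr hqs
  have hcard : ({p, q, r, s} : Set V).ncard = 4 := by
    have h1 := hpq.ne
    have h2 := hpr.ne
    have h3 := hqs.ne
    rw [Set.ncard_insert_of_notMem (by simp [h1, h2, hsp.symm]),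
      Set.ncard_insert_of_notMem (by simp [h3, hrq.symm]), Set.ncard_pair hrs]
  have hSeq : ({p, q, r, s} : Set V) = S := by
    apply Set.eq_of_subset_of_ncard_le _ (by omega) (Set.toFinite _)
    rintro x (rfl | rfl | rfl | rfl)
    exacts [hTS hp, hTS hq, hTS hr, hTS hs]
  obtain ⟨t, ht, hrt, htp⟩ := two r hr p
  have hts : t = s := by
    have : t ∈ ({p, q, r, s} : Set V) := hSeq ▸ hTS ht
    rcases this with rfl | rfl | rfl | rfl
    · exact absurd rfl htp
    · exact absurd hrt.symm (nt p hp _ hq r hr hpq hpr)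
    · exact absurd rfl hrt.ne
    · rfl
  subst hts
  refine Or.inr ⟨p, q, t, r, ?_, by rw [← hSeq, hcard], hsp.symm, hrq.symm, hpq, hqs, hrt.symm,
    hpr.symm⟩
  rw [← hSeq, Set.pair_comm r t]

/-- The induced subgraph `F[S]` belongs to the class `Ψ`. -/
def Good (Ψ : ∀ (W : Type), SimpleGraph W → Prop) {V : Type} (F : SimpleGraph V)
    (S : Set V) : Prop := Ψ S (F.induce S)

lemma psi_hom {Ψ : ∀ (W : Type), SimpleGraph W → Prop}
    (hΨ : Ψ = ForestClass ∨ Ψ = BipartiteClass) {W W' : Type} {K : SimpleGraph W}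
    {K' : SimpleGraph W'} (f : K →g K') (hf : Function.Injective f) (h : Ψ W' K') : Ψ W K := by
  rcases hΨ with rfl | rfl
  · exact SimpleGraph.IsAcyclic.comap f hf h
  · exact SimpleGraph.Colorable.of_hom f h

lemma Good.mono {Ψ : ∀ (W : Type), SimpleGraph W → Prop}
    (hΨ : Ψ = ForestClass ∨ Ψ = BipartiteClass) {V : Type} {F F' : SimpleGraph V} {S : Set V}
    (hF : F' ≤ F) (h : Good Ψ F S) : Good Ψ F' S :=
  psi_hom hΨ (K' := F.induce S) ⟨id, fun hxy => hF hxy⟩ Function.injective_id h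

/-- Adding a vertex with at most one neighbour keeps a graph in the class. -/
lemma Good.pendant {Ψ : ∀ (W : Type), SimpleGraph W → Prop}
    (hΨ : Ψ = ForestClass ∨ Ψ = BipartiteClass) {V : Type} [Finite V] {F : SimpleGraph V}
    {S : Set V} (h : Good Ψ F S) {v z : V} (hv : ∀ y ∈ S, F.Adj v y → y = z) :
    Good Ψ F (insert v S) := by
  classical
  rcases hΨ with rfl | rfl
  · refine (isAcyclic_induce_iff F _).2 fun T hT hne => ?_
    by_cases hvT : v ∈ T
    · refine ⟨v, hvT, z, fun y hy hadj => ?_⟩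
      rcases hT hy with rfl | hyS
      · exact absurd rfl hadj.ne
      · exact hv y hyS hadj
    · refine (isAcyclic_induce_iff F _).1 h T (fun x hx => ?_) hne
      rcases hT hx with rfl | hxS
      · exact absurd hx hvT
      · exact hxS
  · by_cases hvS : v ∈ S
    · rwa [Set.insert_eq_of_mem hvS]
    obtain ⟨col⟩ : (F.induce S).Colorable 2 := h
    let g : V → Fin 2 := fun x =>
      if hx : x ∈ S then col ⟨x, hx⟩ else if hz : z ∈ S then col ⟨z, hz⟩ + 1 else 0
    have hg : ∀ x ∈ S, ∀ y ∈ S, F.Adj x y → g x ≠ g y := by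
      intro x hx y hy hxy
      simp only [g, hx, hy, dif_pos]
      exact col.valid (v := ⟨x, hx⟩) (w := ⟨y, hy⟩) hxy
    have hgv : ∀ y ∈ S, F.Adj v y → g v ≠ g y := by
      intro y hy hvy
      obtain rfl := hv y hy hvy
      simp only [g, hvS, hy, dif_pos, dif_neg, not_false_eq_true]
      generalize col ⟨y, hy⟩ = t
      fin_cases t <;> decide
    refine ⟨SimpleGraph.Coloring.mk (fun x => g x.1) ?_⟩
    rintro ⟨x, rfl | hx⟩ ⟨y, rfl | hy⟩ hxy
    · exact absurd rfl (SimpleGraph.Adj.ne hxy)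
    · exact hgv y hy hxy
    · exact (hgv x hx (SimpleGraph.Adj.symm hxy)).symm
    · exact hg x hx y hy hxy

/-! ### Separations and minimality -/

/-- The three sets `M`, `L`, `R` partition `X`, with `L` and `R` nonempty and no edge of `F`
between them. -/
structure CutPart {V : Type} (F : SimpleGraph V) (X M L R : Set V) : Prop where
  left : L.Nonempty
  right : R.Nonempty
  cover : ∀ z, z ∈ X ↔ z ∈ M ∨ z ∈ L ∨ z ∈ R
  ml : ∀ z ∈ M, z ∉ L
  mr : ∀ z ∈ M, z ∉ R
  lr : ∀ z ∈ L, z ∉ R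
  nadj : ∀ x ∈ L, ∀ y ∈ R, ¬ F.Adj x y

lemma CutPart.symm {V : Type} {F : SimpleGraph V} {X M L R : Set V} (h : CutPart F X M L R) :
    CutPart F X M R L :=
  ⟨h.right, h.left, fun z => by rw [h.cover z]; tauto, h.mr, h.ml, fun z hz hz' => h.lr z hz' hz,
    fun x hx y hy hxy => h.nadj y hy x hx hxy.symm⟩

lemma CutPart.isVertexCut {V : Type} {F : SimpleGraph V} {M L R : Set V}
    (h : CutPart F Set.univ M L R) : IsVertexCut F M := by
  refine ⟨L, R, h.left, h.right, Set.disjoint_left.2 h.lr, ?_, h.nadj⟩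
  ext z
  have h1 := (h.cover z).1 trivial
  have h2 := h.ml z
  have h3 := h.mr z
  simp only [Set.mem_union, Set.mem_compl_iff]
  tauto

/-- A vertex cut in `F[X]` read as a partition of `X` in the ambient vertex set. -/
lemma sep_of_isVertexCut {V : Type} {F : SimpleGraph V} {X : Set V} {M : Set X}
    (h : IsVertexCut (F.induce X) M) :
    ∃ L R : Set V, CutPart F X (Subtype.val '' M) L R := by
  obtain ⟨L, R, hL, hR, hd, hu, hn⟩ := h
  have key : ∀ z : X, (z ∈ L ∨ z ∈ R) ↔ z ∉ M := fun z => by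
    rw [← Set.mem_union, hu, Set.mem_compl_iff]
  refine ⟨Subtype.val '' L, Subtype.val '' R, hL.image _, hR.image _, ?_, ?_, ?_, ?_, ?_⟩
  · intro z
    constructor
    · intro hz
      have := key ⟨z, hz⟩
      by_cases hm : (⟨z, hz⟩ : X) ∈ M
      · exact Or.inl ⟨_, hm, rfl⟩
      · rcases this.2 hm with h | h
        · exact Or.inr (Or.inl ⟨_, h, rfl⟩)
        · exact Or.inr (Or.inr ⟨_, h, rfl⟩)
    · rintro (⟨x, -, rfl⟩ | ⟨x, -, rfl⟩ | ⟨x, -, rfl⟩) <;> exact x.2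
  · rintro _ ⟨x, hx, rfl⟩ ⟨y, hy, hxy⟩
    obtain rfl := Subtype.ext hxy
    exact (key y).1 (Or.inl hy) hx
  · rintro _ ⟨x, hx, rfl⟩ ⟨y, hy, hxy⟩
    obtain rfl := Subtype.ext hxy
    exact (key y).1 (Or.inr hy) hx
  · rintro _ ⟨x, hx, rfl⟩ ⟨y, hy, hxy⟩
    obtain rfl := Subtype.ext hxy
    exact Set.disjoint_left.1 hd hx hy
  · rintro _ ⟨x, hx, rfl⟩ _ ⟨y, hy, rfl⟩ hxy
    exact hn x hx y hy hxy

/-- Minimality as an edge count. If `F[X]` arises from `G` by deleting the vertices outside `X`,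
which destroys at least the edges in `D`, and adding edges from `A`, then as soon as
`3 |V ∖ X| + |A| ≤ |D|` the quality of `F[X]` is at least that of `G` (here `α ≤ 3` is used), so
`F[X]` has a `Ψ`-cut. -/
lemma exists_sep {Ψ : ∀ (W : Type), SimpleGraph W → Prop}
    (hΨ : Ψ = ForestClass ∨ Ψ = BipartiteClass) {α β : ℝ} (hα2 : α ≤ 3)
    {V : Type} [Finite V] {G : SimpleGraph V} (hG : MinCounterexample Ψ α β G)
    (X : Set V) (F : SimpleGraph V) (D A : Finset (Sym2 V)) (hX : 4 ≤ X.ncard)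
    (hXc : 0 < Xᶜ.ncard) (hD : ∀ e ∈ D, e ∈ G.edgeSet ∧ ∃ v ∈ e, v ∉ X)
    (hF : ∀ p ∈ X, ∀ q ∈ X, F.Adj p q → G.Adj p q ∨ s(p, q) ∈ A)
    (hc : 3 * Xᶜ.ncard + A.card ≤ D.card) :
    ∃ M L R : Set V, CutPart F X M L R ∧ Good Ψ F M := by
  classical
  have hsum := Set.ncard_add_ncard_compl X
  have hedge : Nat.card (F.induce X).edgeSet + D.card ≤ Nat.card G.edgeSet + A.card := by
    have h1 : Nat.card (F.induce X).edgeSet ≤ (G.edgeSet \ ↑D ∪ (A : Set (Sym2 V))).ncard := by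
      rw [Nat.card_coe_set_eq, ← Set.ncard_image_of_injective (F.induce X).edgeSet
        (Sym2.map.injective Subtype.val_injective)]
      apply Set.ncard_le_ncard _ (Set.toFinite _)
      rintro _ ⟨e, he, rfl⟩
      induction e with
      | _ p q =>
        have hpq : F.Adj p.1 q.1 := he
        rw [Sym2.map_mk]
        rcases hF p p.2 q q.2 hpq with h | h
        · refine Or.inl ⟨h, fun hd => ?_⟩
          obtain ⟨v, hv, hvX⟩ := (hD _ hd).2
          rcases Sym2.mem_iff.1 hv with rfl | rfl
          · exact hvX p.2
          · exact hvX q.2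
        · exact Or.inr h
    have h2 := Set.ncard_union_le (G.edgeSet \ ↑D) (A : Set (Sym2 V))
    have hsub : (D : Set (Sym2 V)) ⊆ G.edgeSet := fun e he => (hD e he).1
    have h3 := Set.ncard_sdiff_add_ncard_of_subset hsub
    rw [Set.ncard_coe_finset] at h2 h3
    rw [Nat.card_coe_set_eq G.edgeSet]
    omega
  obtain ⟨hn, hq, hno, hmin⟩ := hG
  have hq' : 0 < quality α β (F.induce X) := by
    unfold quality at hq ⊢
    rw [Nat.card_coe_set_eq X, ← hsum] at *
    have e1 : ((Nat.card (F.induce X).edgeSet : ℕ) : ℝ) + D.card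
        ≤ Nat.card G.edgeSet + A.card := by exact_mod_cast hedge
    have e2 : (3 : ℝ) * Xᶜ.ncard + A.card ≤ D.card := by exact_mod_cast hc
    have e3 : α * (Xᶜ.ncard : ℝ) ≤ 3 * Xᶜ.ncard :=
      mul_le_mul_of_nonneg_right hα2 (Nat.cast_nonneg _)
    push_cast at hq
    linarith
  obtain ⟨M, hM, hgood⟩ := hmin X (F.induce X) (by rwa [Nat.card_coe_set_eq])
    (by rw [Nat.card_coe_set_eq]; omega) hq'
  obtain ⟨L, R, hs⟩ := sep_of_isVertexCut hM
  have hmem : ∀ z : ↥(Subtype.val '' M),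
      (⟨z.1, (hs.cover z).2 (Or.inl z.2)⟩ : X) ∈ M := by
    rintro ⟨_, y, hy, rfl⟩
    exact hy
  refine ⟨_, L, R, hs, psi_hom hΨ (K' := (F.induce X).induce M)
    ⟨fun z => ⟨⟨z.1, (hs.cover z).2 (Or.inl z.2)⟩, hmem z⟩, fun h => h⟩ ?_ hgood⟩
  · intro x y hxy
    exact Subtype.ext (congrArg (fun t : M => t.1.1) hxy)

lemma false_of_sep {Ψ : ∀ (W : Type), SimpleGraph W → Prop} {α β : ℝ}
    {V : Type} {G : SimpleGraph V} (hG : MinCounterexample Ψ α β G) {M L R : Set V}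
    (h : CutPart G Set.univ M L R) (hM : Good Ψ G M) : False :=
  hG.2.2.1 ⟨M, h.isVertexCut, hM⟩

lemma not_degen_of_sep {V : Type} [Finite V] {G : SimpleGraph V} (hfc : ¬ HasForestCut G)
    {M L R : Set V} (h : CutPart G Set.univ M L R) : ¬ Degen G M := fun hM =>
  hfc ⟨M, h.isVertexCut, (isAcyclic_induce_iff G M).2 hM⟩

/-- The neighbourhood of a vertex that is not adjacent to all others is a cut. -/
lemma exists_cutPart_neighborSet {V : Type} [Finite V] {G : SimpleGraph V} {v : V}
    (hv : vdeg G v + 2 ≤ Nat.card V) :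
    ∃ L R, CutPart G Set.univ (G.neighborSet v) L R := by
  have : ∃ z, z ∉ insert v (G.neighborSet v) := by
    by_contra! hall
    have h1 : insert v (G.neighborSet v) = Set.univ := Set.eq_univ_of_forall hall
    have h2 := Set.ncard_insert_le v (G.neighborSet v)
    rw [h1, Set.ncard_univ] at h2
    unfold vdeg at hv
    omega
  obtain ⟨z, hz⟩ := this
  refine ⟨{v}, (insert v (G.neighborSet v))ᶜ, ⟨v, rfl⟩, ⟨z, hz⟩, ?_, ?_, ?_, ?_, ?_⟩
  · intro x
    by_cases h1 : x = v <;> by_cases h2 : G.Adj v x <;> simp [h1, h2]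
  · rintro x hx rfl
    exact absurd rfl (SimpleGraph.Adj.ne hx)
  · exact fun x hx hx' => hx' (Or.inr hx)
  · rintro x rfl hx
    exact hx (Or.inl rfl)
  · rintro x rfl y hy hxy
    exact hy (Or.inr hxy)

lemma not_degen_neighborSet {V : Type} [Finite V] {G : SimpleGraph V} (hfc : ¬ HasForestCut G)
    {v : V} (hv : vdeg G v + 2 ≤ Nat.card V) : ¬ Degen G (G.neighborSet v) := by
  obtain ⟨L, R, h⟩ := exists_cutPart_neighborSet hv
  exact not_degen_of_sep hfc h

/-! ### Small degrees -/

/-- A graph on four or five vertices with positive quality is not complete. -/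
lemma exists_nonadj {Ψ : ∀ (W : Type), SimpleGraph W → Prop} {α β : ℝ} (hα2 : α ≤ 3)
    (hβ : 4 * α - β = 6) {V : Type} [Fintype V] {G : SimpleGraph V}
    (hG : MinCounterexample Ψ α β G) (hn : Nat.card V ≤ 5) : ∃ u v, u ≠ v ∧ ¬ G.Adj u v := by
  classical
  by_contra! h
  have htop : G = ⊤ := by
    ext u v
    exact ⟨fun h' => h'.ne, fun h' => h u v h'⟩
  obtain ⟨h4, hq, -⟩ := hG
  have hcard : Nat.card G.edgeSet = (Nat.card V).choose 2 := by
    subst htop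
    rw [Nat.card_eq_fintype_card, Nat.card_eq_fintype_card, ← edgeFinset_card,
      card_edgeFinset_top_eq_card_choose_two]
  unfold quality at hq
  rw [hcard] at hq
  obtain h | h : Nat.card V = 4 ∨ Nat.card V = 5 := by omega
  all_goals
    rw [h] at hq
    norm_num [Nat.choose] at hq
    linarith

lemma five_le_card {Ψ : ∀ (W : Type), SimpleGraph W → Prop} {α β : ℝ} (hα2 : α ≤ 3)
    (hβ : 4 * α - β = 6) {V : Type} [Fintype V] {G : SimpleGraph V}
    (hG : MinCounterexample Ψ α β G) (hfc : ¬ HasForestCut G) : 5 ≤ Nat.card V := by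
  by_contra hlt
  have h4 : Nat.card V = 4 := by have := hG.1; omega
  obtain ⟨u, v, huv, hadj⟩ := exists_nonadj hα2 hβ hG (by omega)
  have hsum := Set.ncard_add_ncard_compl ({u, v} : Set V)
  rw [Set.ncard_pair huv] at hsum
  have hnd : ¬ Degen G ({u, v}ᶜ : Set V) := by
    refine not_degen_of_sep hfc (L := {u}) (R := {v})
      ⟨⟨u, rfl⟩, ⟨v, rfl⟩, ?_, ?_, ?_, ?_, ?_⟩
    · intro x
      by_cases h1 : x = u <;> by_cases h2 : x = v <;> simp [h1, h2]
    · rintro x hx rfl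
      exact hx (Or.inl rfl)
    · rintro x hx rfl
      exact hx (Or.inr rfl)
    · rintro x rfl h
      exact huv h
    · rintro x rfl y rfl
      exact hadj
  rcases triangle_or_square (by omega) hnd with
    ⟨p, hp, q, hq, r, hr, hpq, hpr, hqr⟩ | ⟨a, b, c, d, -, hc, -⟩
  · have h3 : ({p, q, r} : Set V).ncard = 3 := by
      rw [Set.ncard_insert_of_notMem (by simp [hpq.ne, hpr.ne]), Set.ncard_pair hqr.ne]
    have := Set.ncard_le_ncard (s := {p, q, r}) (t := ({u, v}ᶜ : Set V))
      (by rintro x (rfl | rfl | rfl) <;> assumption) (Set.toFinite _)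
    omega
  · omega

/-- A vertex without neighbours in `R` can be added to the side `L` of a separation of
`V ∖ {v}`. -/
lemma CutPart.insert_left {V : Type} {F G : SimpleGraph V} (hGF : G ≤ F) {v : V} {M L R : Set V}
    (h : CutPart F {v}ᶜ M L R) (hv : ∀ y ∈ R, ¬ G.Adj v y) :
    CutPart G Set.univ M (insert v L) R := by
  have hM : v ∉ M := fun hm => (h.cover v).2 (Or.inl hm) rfl
  have hR : v ∉ R := fun hm => (h.cover v).2 (Or.inr (Or.inr hm)) rfl
  refine ⟨⟨v, Or.inl rfl⟩, h.right, ?_, ?_, h.mr, ?_, ?_⟩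
  · intro z
    by_cases hz : z = v
    · simp [hz]
    · have := (h.cover z).1 hz
      simp only [Set.mem_univ, Set.mem_insert_iff, true_iff]
      tauto
  · rintro z hz (rfl | hz')
    · exact hM hz
    · exact h.ml z hz hz'
  · rintro z (rfl | hz)
    · exact hR
    · exact h.lr z hz
  · rintro x (rfl | hx) y hy hxy
    · exact hv y hy hxy
    · exact h.nadj x hx y hy (hGF hxy)

/-- If some side of a separation of `V ∖ {v}` contains no neighbour of `v`, the separation extends
to `G`. -/
lemma false_of_sep_compl {Ψ : ∀ (W : Type), SimpleGraph W → Prop}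
    (hΨ : Ψ = ForestClass ∨ Ψ = BipartiteClass) {α β : ℝ} {V : Type} {F G : SimpleGraph V}
    (hG : MinCounterexample Ψ α β G) (hGF : G ≤ F) {v : V} {M L R : Set V}
    (h : CutPart F {v}ᶜ M L R) (hM : Good Ψ F M)
    (hv : (∀ y ∈ R, ¬ G.Adj v y) ∨ (∀ y ∈ L, ¬ G.Adj v y)) : False := by
  rcases hv with hv | hv
  · exact false_of_sep hG (h.insert_left hGF hv) (hM.mono hΨ hGF)
  · exact false_of_sep hG (h.symm.insert_left hGF hv) (hM.mono hΨ hGF)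

lemma four_le_vdeg {Ψ : ∀ (W : Type), SimpleGraph W → Prop}
    (hΨ : Ψ = ForestClass ∨ Ψ = BipartiteClass) {α β : ℝ} (hα2 : α ≤ 3)
    (hβ : 4 * α - β = 6) {V : Type} [Fintype V] {G : SimpleGraph V}
    (hG : MinCounterexample Ψ α β G) (hfc : ¬ HasForestCut G) (v : V) : 4 ≤ vdeg G v := by
  classical
  by_contra hlt
  have hn := five_le_card hα2 hβ hG hfc
  have hN := not_degen_neighborSet hfc (v := v) (by omega)
  have hd : (G.neighborSet v).ncard ≤ 3 := by unfold vdeg at hlt; omega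
  rcases triangle_or_square (by omega) hN with
    ⟨p, hp, q, hq, r, hr, hpq, hpr, hqr⟩ | ⟨a, b, c, d, -, hc, -⟩
  swap
  · omega
  have h3 : ({p, q, r} : Set V).ncard = 3 := by
    rw [Set.ncard_insert_of_notMem (by simp [hpq.ne, hpr.ne]), Set.ncard_pair hqr.ne]
  have hNeq : ({p, q, r} : Set V) = G.neighborSet v :=
    Set.eq_of_subset_of_ncard_le (by rintro x (rfl | rfl | rfl) <;> assumption) (by omega)
      (Set.toFinite _)
  -- The neighbourhood is a triangle, so a cut of `G - v` never separates it.
  have hsum := Set.ncard_add_ncard_compl ({v}ᶜ : Set V)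
  rw [compl_compl, Set.ncard_singleton] at hsum
  have hvp : G.Adj v p := hp
  have hvq : G.Adj v q := hq
  have hvr : G.Adj v r := hr
  obtain ⟨M, L, R, hs, hM⟩ := exists_sep hΨ hα2 hG {v}ᶜ G {s(v, p), s(v, q), s(v, r)} ∅
    (by omega) (by simp) (by simp [hvp, hvq, hvr]) (fun _ _ _ _ h => Or.inl h) (by
      rw [compl_compl, Set.ncard_singleton, Finset.card_insert_of_notMem,
        Finset.card_insert_of_notMem] <;> simp [hpq.ne, hpr.ne, hqr.ne, hvq.ne, hvr.ne])
  have hclique : ∀ x, G.Adj v x → ∀ y, G.Adj v y → x ≠ y → G.Adj x y := by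
    intro x hx y hy hxy
    have hx' : x ∈ ({p, q, r} : Set V) := hNeq ▸ hx
    have hy' : y ∈ ({p, q, r} : Set V) := hNeq ▸ hy
    rcases hx' with rfl | rfl | rfl <;> rcases hy' with rfl | rfl | rfl <;>
      first
        | exact absurd rfl hxy
        | assumption
        | (apply SimpleGraph.Adj.symm; assumption)
  refine false_of_sep_compl hΨ hG le_rfl hs hM ?_
  by_contra! hcon
  obtain ⟨⟨y, hy, hvy⟩, ⟨x, hx, hvx⟩⟩ := hcon
  refine hs.nadj x hx y hy (hclique x hvx y hvy ?_)
  rintro rfl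
  exact hs.lr x hx hy

lemma six_le_card {Ψ : ∀ (W : Type), SimpleGraph W → Prop}
    (hΨ : Ψ = ForestClass ∨ Ψ = BipartiteClass) {α β : ℝ} (hα2 : α ≤ 3)
    (hβ : 4 * α - β = 6) {V : Type} [Fintype V] {G : SimpleGraph V}
    (hG : MinCounterexample Ψ α β G) (hfc : ¬ HasForestCut G) : 6 ≤ Nat.card V := by
  by_contra hlt
  obtain ⟨u, v, huv, hadj⟩ := exists_nonadj hα2 hβ hG (by omega)
  have h4 := four_le_vdeg hΨ hα2 hβ hG hfc u
  have h5 := five_le_card hα2 hβ hG hfc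
  have hsum := Set.ncard_add_ncard_compl ({u, v} : Set V)
  rw [Set.ncard_pair huv] at hsum
  have := Set.ncard_le_ncard (s := G.neighborSet u) (t := ({u, v}ᶜ : Set V)) (by
    rintro x hx (rfl | rfl)
    · exact absurd rfl (SimpleGraph.Adj.ne hx)
    · exact hadj hx) (Set.toFinite _)
  unfold vdeg at h4
  omega

/-- Subdividing an edge of a forest gives a forest: replace the edge `ac` of `G + ac` by the path
`a v c`. -/
lemma Degen.subdivide {V : Type} {G : SimpleGraph V} {a c v : V} {M : Set V}
    (h : Degen (G ⊔ edge a c) M) (hac : a ≠ c) (hnac : ¬ G.Adj a c) (ha : a ∈ M) (hc : c ∈ M)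
    (hvM : v ∉ M) (hv : ∀ y ∈ M, G.Adj v y → y = a ∨ y = c) : Degen G (insert v M) := by
  intro T hT hne
  have hTM : ∀ x ∈ T, x ≠ v → x ∈ M := fun x hx hxv => (hT hx).resolve_left hxv
  by_cases hvT : v ∈ T
  swap
  · exact h.mono (G := G) (fun x _ y _ hxy => Or.inl hxy) T
      (fun x hx => hTM x hx (by rintro rfl; exact hvT hx)) hne
  by_cases haT : a ∈ T
  swap
  · refine ⟨v, hvT, c, fun y hy hvy => ?_⟩
    rcases hv y (hTM y hy hvy.ne') hvy with rfl | rfl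
    · exact absurd hy haT
    · rfl
  by_cases hcT : c ∈ T
  swap
  · refine ⟨v, hvT, a, fun y hy hvy => ?_⟩
    rcases hv y (hTM y hy hvy.ne') hvy with rfl | rfl
    · rfl
    · exact absurd hy hcT
  have hav : a ≠ v := by rintro rfl; exact hvM ha
  have hcv : c ≠ v := by rintro rfl; exact hvM hc
  obtain ⟨p, hp, z, hz⟩ := h (T \ {v}) (fun x hx => hTM x hx.1 hx.2) ⟨a, haT, hav⟩
  have hFac : (G ⊔ edge a c).Adj a c := Or.inr (by rw [edge_adj]; simp [hac])
  by_cases hpa : p = a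
  · subst hpa
    refine ⟨p, haT, v, fun y hy hpy => ?_⟩
    by_contra hyv
    rw [hz y ⟨hy, hyv⟩ (Or.inl hpy), ← hz c ⟨hcT, hcv⟩ hFac] at hpy
    exact hnac hpy
  by_cases hpc : p = c
  · subst hpc
    refine ⟨p, hcT, v, fun y hy hpy => ?_⟩
    by_contra hyv
    rw [hz y ⟨hy, hyv⟩ (Or.inl hpy), ← hz a ⟨haT, hav⟩ hFac.symm] at hpy
    exact hnac hpy.symm
  refine ⟨p, hp.1, z, fun y hy hpy => hz y ⟨hy, ?_⟩ (Or.inl hpy)⟩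
  rintro rfl
  rcases hv p (hTM p hp.1 hp.2) hpy.symm with h | h
  · exact hpa h
  · exact hpc h

/-- The neighbourhood of a vertex of degree 4 contains a triangle. The only alternative is an
induced 4-cycle `abcd`: it is bipartite, and in the forest case `v` may be replaced by the
edge `ac`. -/
lemma exists_triangle {Ψ : ∀ (W : Type), SimpleGraph W → Prop}
    (hΨ : Ψ = ForestClass ∨ Ψ = BipartiteClass) {α β : ℝ} (hα2 : α ≤ 3)
    (hβ : 4 * α - β = 6) {V : Type} [Fintype V] {G : SimpleGraph V}
    (hG : MinCounterexample Ψ α β G) (hfc : ¬ HasForestCut G) {v : V} (hv : vdeg G v = 4) :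
    ∃ p q r, G.Adj v p ∧ G.Adj v q ∧ G.Adj v r ∧ G.Adj p q ∧ G.Adj p r ∧ G.Adj q r := by
  classical
  have hn := six_le_card hΨ hα2 hβ hG hfc
  have hN := not_degen_neighborSet hfc (v := v) (by omega)
  rcases triangle_or_square hv.le hN with
    ⟨p, hp, q, hq, r, hr, hpq, hpr, hqr⟩ | ⟨a, b, c, d, hNv, -, hac, hbd, hab, hbc, hcd, hda⟩
  · exact ⟨p, q, r, hp, hq, hr, hpq, hpr, hqr⟩
  by_contra hno
  have mem : ∀ x, G.Adj v x ↔ x = a ∨ x = b ∨ x = c ∨ x = d := fun x => by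
    rw [← mem_neighborSet, hNv]
    simp
  have hva : G.Adj v a := (mem a).2 (by simp)
  have hvb : G.Adj v b := (mem b).2 (by simp)
  have hvc : G.Adj v c := (mem c).2 (by simp)
  have hvd : G.Adj v d := (mem d).2 (by simp)
  have hnac : ¬ G.Adj a c := fun h => hno ⟨a, b, c, hva, hvb, hvc, hab, h, hbc⟩
  have hnbd : ¬ G.Adj b d := fun h => hno ⟨b, c, d, hvb, hvc, hvd, hbc, h, hcd⟩
  have hsum := Set.ncard_add_ncard_compl ({v}ᶜ : Set V)
  rw [compl_compl, Set.ncard_singleton] at hsum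
  obtain ⟨M, L, R, hs, hM⟩ := exists_sep hΨ hα2 hG {v}ᶜ (G ⊔ edge a c)
    {s(v, a), s(v, b), s(v, c), s(v, d)} {s(a, c)}
    (by omega) (by simp) (by simp [hva, hvb, hvc, hvd])
    (by
      rintro x - y - (h | h)
      · exact Or.inl h
      · rw [edge_adj] at h
        right
        rcases h.1 with ⟨rfl, rfl⟩ | ⟨rfl, rfl⟩ <;> simp) (by
      rw [compl_compl, Set.ncard_singleton, Finset.card_insert_of_notMem,
        Finset.card_insert_of_notMem, Finset.card_insert_of_notMem] <;>
        simp [hab.ne, hac, hda.ne', hbc.ne, hbd, hcd.ne, hvb.ne, hvc.ne, hvd.ne])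
  have hcol : Ψ = BipartiteClass → False := by
    rintro rfl
    obtain ⟨L, R, hsep⟩ := exists_cutPart_neighborSet (G := G) (v := v) (by omega)
    refine false_of_sep hG hsep ⟨SimpleGraph.Coloring.mk
      (fun x => if x.1 = a ∨ x.1 = c then (0 : Fin 2) else 1) ?_⟩
    rintro ⟨x, hx⟩ ⟨y, hy⟩ (hxy : G.Adj x y)
    have hx' := (mem x).1 hx
    have hy' := (mem y).1 hy
    have := hxy.ne
    by_cases h1 : x = a ∨ x = c <;> by_cases h2 : y = a ∨ y = c <;> simp only [h1, h2, if_true,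
      if_false] <;> first | decide | skip
    · exfalso
      rcases h1 with rfl | rfl <;> rcases h2 with rfl | rfl <;>
        first | exact this rfl | exact hnac hxy | exact hnac hxy.symm
    · exfalso
      have h3 : x = b ∨ x = d := by tauto
      have h4 : y = b ∨ y = d := by tauto
      rcases h3 with rfl | rfl <;> rcases h4 with rfl | rfl <;>
        first | exact this rfl | exact hnbd hxy | exact hnbd hxy.symm
  rcases hΨ with hF | hF
  swap
  · exact hcol hF
  have hFac : (G ⊔ edge a c).Adj a c := Or.inr (by rw [edge_adj]; simp [hac])
  have hvM : v ∉ M := fun hm => (hs.cover v).2 (Or.inl hm) rfl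
  have cov : ∀ x, G.Adj v x → x ∈ M ∨ x ∈ L ∨ x ∈ R := fun x hx =>
    (hs.cover x).1 (by simpa using hx.ne.symm)
  -- A separation of `G - v + ac` can only separate `b` from `d`, with `a` and `c` in the cut.
  by_cases hside : (∀ y ∈ R, ¬ G.Adj v y) ∨ (∀ y ∈ L, ¬ G.Adj v y)
  · exact false_of_sep_compl (Or.inl hF) hG le_sup_left hs hM hside
  have key : ∀ M L R : Set V, CutPart (G ⊔ edge a c) {v}ᶜ M L R → b ∈ L → d ∈ R →
      a ∈ M ∧ c ∈ M := by
    intro M L R hs hb hd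
    have cov : ∀ x, G.Adj v x → x ∈ M ∨ x ∈ L ∨ x ∈ R := fun x hx =>
      (hs.cover x).1 (by simpa using hx.ne')
    refine ⟨?_, ?_⟩
    · rcases cov a hva with h | h | h
      · exact h
      · exact absurd (Or.inl hda.symm) (hs.nadj a h d hd)
      · exact absurd (Or.inl hab.symm) (hs.nadj b hb a h)
    · rcases cov c hvc with h | h | h
      · exact h
      · exact absurd (Or.inl hcd) (hs.nadj c h d hd)
      · exact absurd (Or.inl hbc) (hs.nadj b hb c h)
  have hbdsep : (b ∈ L ∧ d ∈ R) ∨ (d ∈ L ∧ b ∈ R) := by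
    push Not at hside
    obtain ⟨⟨y, hy, hvy⟩, ⟨x, hx, hvx⟩⟩ := hside
    have hxy := hs.nadj x hx y hy
    have hne : x ≠ y := by rintro rfl; exact hs.lr x hx hy
    rcases (mem x).1 hvx with rfl | rfl | rfl | rfl <;>
      rcases (mem y).1 hvy with rfl | rfl | rfl | rfl <;>
      first
        | exact absurd rfl hne
        | exact Or.inl ⟨hx, hy⟩
        | exact Or.inr ⟨hx, hy⟩
        | exact absurd hFac hxy
        | exact absurd hFac.symm hxy
        | (refine absurd (Or.inl ?_) hxy
           first
             | assumption
             | (apply SimpleGraph.Adj.symm; assumption))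
  have hbM : b ∉ M := fun h => by
    rcases hbdsep with h' | h'
    · exact hs.ml b h h'.1
    · exact hs.mr b h h'.2
  have hdM : d ∉ M := fun h => by
    rcases hbdsep with h' | h'
    · exact hs.mr d h h'.2
    · exact hs.ml d h h'.1
  have hacM : a ∈ M ∧ c ∈ M := by
    rcases hbdsep with h' | h'
    · exact key M L R hs h'.1 h'.2
    · exact key M R L hs.symm h'.2 h'.1
  have hdeg : Degen (G ⊔ edge a c) M := (isAcyclic_induce_iff _ M).1 (by
    have := hM
    rw [hF] at this
    exact this)
  refine not_degen_of_sep hfc (M := insert v M) (L := L) (R := R)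
    ⟨hs.left, hs.right, ?_, ?_, ?_, hs.lr, fun x hx y hy hxy => hs.nadj x hx y hy (Or.inl hxy)⟩
    (hdeg.subdivide hac hnac hacM.1 hacM.2 hvM ?_)
  · intro z
    by_cases hz : z = v
    · simp [hz]
    · have := (hs.cover z).1 hz
      simp only [Set.mem_univ, Set.mem_insert_iff, true_iff]
      tauto
  · rintro z (rfl | hz) hzL
    · exact (hs.cover z).2 (Or.inr (Or.inl hzL)) rfl
    · exact hs.ml z hz hzL
  · rintro z (rfl | hz) hzR
    · exact (hs.cover z).2 (Or.inr (Or.inr hzR)) rfl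
    · exact hs.mr z hz hzR
  · intro y hy hvy
    rcases (mem y).1 hvy with rfl | rfl | rfl | rfl
    · exact Or.inl rfl
    · exact absurd hy hbM
    · exact Or.inr rfl
    · exact absurd hy hdM

/-! ### A reducible `K₄` configuration -/

/-- The extension step: a separation of `G - u - w + xb` with `b ∉ R` extends to `G` when
`a`, `x`, `y` and `a`, `b`, `x` are triangles of `G + xb`. Unless `a, b, x, y` all avoid one side
(which then takes `u` and `w`), `b` and `y` are on different sides and `a`, `x` in the cut; in that
case `w` goes into the cut, where its only neighbour is `a`, and `u` joins the side of `b`. -/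
lemma false_of_sep_twin {Ψ : ∀ (W : Type), SimpleGraph W → Prop}
    (hΨ : Ψ = ForestClass ∨ Ψ = BipartiteClass) {α β : ℝ}
    {V : Type} [Finite V] {G : SimpleGraph V}
    (hG : MinCounterexample Ψ α β G) {u w a b x y : V}
    (hu : ∀ z, G.Adj u z ↔ z = w ∨ z = a ∨ z = b ∨ z = x)
    (hw : ∀ z, G.Adj w z ↔ z = u ∨ z = a ∨ z = b ∨ z = y)
    (hab : G.Adj a b) (hax : G.Adj a x) (hay : G.Adj a y) (hxy : G.Adj x y)
    (hxw : x ≠ w) (hxb : x ≠ b) (hyu : y ≠ u)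
    (M L R : Set V) (hs : CutPart (G ⊔ edge x b) {u, w}ᶜ M L R) (hM : Good Ψ (G ⊔ edge x b) M)
    (hbR : b ∉ R) : False := by
  classical
  have huw : G.Adj u w := (hu w).2 (by simp)
  have hua : G.Adj u a := (hu a).2 (by simp)
  have hub : G.Adj u b := (hu b).2 (by simp)
  have hux : G.Adj u x := (hu x).2 (by simp)
  have hwa : G.Adj w a := (hw a).2 (by simp)
  have hwb : G.Adj w b := (hw b).2 (by simp)
  have hwy : G.Adj w y := (hw y).2 (by simp)
  have hFxb : (G ⊔ edge x b).Adj x b := Or.inr (by rw [edge_adj]; simp [hxb])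
  have huM : u ∉ M ∧ u ∉ L ∧ u ∉ R := by
    have := hs.cover u
    simp only [Set.mem_compl_iff, Set.mem_insert_iff, Set.mem_singleton_iff, true_or,
      not_true_eq_false, false_iff, not_or] at this
    exact this
  have hwM : w ∉ M ∧ w ∉ L ∧ w ∉ R := by
    have := hs.cover w
    simp only [Set.mem_compl_iff, Set.mem_insert_iff, Set.mem_singleton_iff, or_true,
      not_true_eq_false, false_iff, not_or] at this
    exact this
  have cov : ∀ t, t ≠ u → t ≠ w → t ∈ M ∨ t ∈ L ∨ t ∈ R := fun t h1 h2 =>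
    (hs.cover t).1 (by simp [h1, h2])
  have hGF : ∀ {s t}, G.Adj s t → (G ⊔ edge x b).Adj s t := fun h => Or.inl h
  have hno : ∀ s t, (G ⊔ edge x b).Adj s t → s ∈ L → t ∉ R := fun s t h hs' ht =>
    hs.nadj s hs' t ht h
  have ca := cov a hua.ne' hwa.ne'
  have cb := cov b hub.ne' hwb.ne'
  have cx := cov x hux.ne' hxw
  have cy := cov y hyu hwy.ne'
  by_cases hLR : a ∉ R ∧ x ∉ R ∧ y ∉ R
  · refine false_of_sep hG (M := M) (L := insert u (insert w L)) (R := R)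
      ⟨⟨u, Or.inl rfl⟩, hs.right, ?_, ?_, hs.mr, ?_, ?_⟩ (hM.mono hΨ le_sup_left)
    · intro t
      have := cov t
      simp only [Set.mem_univ, Set.mem_insert_iff, true_iff]
      grind
    · rintro t ht (rfl | rfl | h)
      exacts [huM.1 ht, hwM.1 ht, hs.ml t ht h]
    · rintro t (rfl | rfl | h)
      exacts [huM.2.2, hwM.2.2, hs.lr t h]
    · rintro t (rfl | rfl | h) s hsR hts
      · rcases (hu s).1 hts with rfl | rfl | rfl | rfl <;> simp_all
      · rcases (hw s).1 hts with rfl | rfl | rfl | rfl <;> simp_all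
      · exact hs.nadj t h s hsR (hGF hts)
  by_cases hLL : a ∉ L ∧ b ∉ L ∧ x ∉ L ∧ y ∉ L
  · refine false_of_sep hG (M := M) (L := L) (R := insert u (insert w R))
      ⟨hs.left, ⟨u, Or.inl rfl⟩, ?_, hs.ml, ?_, ?_, ?_⟩ (hM.mono hΨ le_sup_left)
    · intro t
      have := cov t
      simp only [Set.mem_univ, Set.mem_insert_iff, true_iff]
      grind
    · rintro t ht (rfl | rfl | h)
      exacts [huM.1 ht, hwM.1 ht, hs.mr t ht h]
    · rintro t ht (rfl | rfl | h)
      exacts [huM.2.1 ht, hwM.2.1 ht, hs.lr t ht h]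
    · rintro s hsL t (rfl | rfl | h) hts
      · rcases (hu s).1 hts.symm with rfl | rfl | rfl | rfl <;> simp_all
      · rcases (hw s).1 hts.symm with rfl | rfl | rfl | rfl <;> simp_all
      · exact hs.nadj s hsL t h (hGF hts)
  -- The edges `ab`, `bx`, `ax`, `ay`, `xy` now force `b ∈ L`, `y ∈ R` and `a, x ∈ M`.
  have n1 := hno a b (hGF hab)
  have n2 := hno b a (hGF hab.symm)
  have n3 := hno x b hFxb
  have n4 := hno b x hFxb.symm
  have n5 := hno a x (hGF hax)
  have n6 := hno x a (hGF hax.symm)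
  have n7 := hno a y (hGF hay)
  have n8 := hno y a (hGF hay.symm)
  have n9 := hno x y (hGF hxy)
  have n10 := hno y x (hGF hxy.symm)
  obtain ⟨hbL, hyR, haM, hxM⟩ : b ∈ L ∧ y ∈ R ∧ a ∈ M ∧ x ∈ M := by
    have d1 := hs.lr a
    have d2 := hs.lr b
    have d3 := hs.lr x
    have d4 := hs.lr y
    grind
  have hgood : Good Ψ G (insert w M) := by
    refine (hM.mono hΨ le_sup_left).pendant hΨ (z := a) fun s hsM hws => ?_
    rcases (hw s).1 hws with rfl | rfl | rfl | rfl
    · exact absurd hsM huM.1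
    · rfl
    · exact absurd hbL (hs.ml _ hsM)
    · exact absurd hyR (hs.mr _ hsM)
  refine false_of_sep hG (M := insert w M) (L := insert u L) (R := R)
    ⟨⟨u, Or.inl rfl⟩, hs.right, ?_, ?_, ?_, ?_, ?_⟩ hgood
  · intro t
    have := cov t
    simp only [Set.mem_univ, Set.mem_insert_iff, true_iff]
    grind
  · rintro t (rfl | ht) (rfl | h)
    exacts [huw.ne rfl, hwM.2.1 h, huM.1 ht, hs.ml t ht h]
  · rintro t (rfl | ht)
    exacts [hwM.2.2, hs.mr t ht]
  · rintro t (rfl | h)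
    exacts [huM.2.2, hs.lr t h]
  · rintro t (rfl | h) s hsR hts
    · rcases (hu s).1 hts with rfl | rfl | rfl | rfl
      exacts [hwM.2.2 hsR, hs.mr _ haM hsR, hs.lr _ hbL hsR, hs.mr _ hxM hsR]
    · exact hs.nadj t h s hsR (hGF hts)

/-- Two adjacent vertices `u`, `w` of degree 4 lying in a common `K₄ = {u, w, a, b}`, with further
neighbours `x` of `u` and `y` of `w`: if `b` has degree above 4, then `b` is adjacent to `x` or
to `y`. Otherwise `{a, b, x, y}` is a cut, so not a forest, and since `b` is a leaf in it, `a, x, y`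
form a triangle. A cut of `G - u - w + xb` then extends to `G` by `false_of_sep_twin`. -/
lemma false_of_twin_K4 {Ψ : ∀ (W : Type), SimpleGraph W → Prop}
    (hΨ : Ψ = ForestClass ∨ Ψ = BipartiteClass) {α β : ℝ} (hα2 : α ≤ 3)
    {V : Type} [Finite V] {G : SimpleGraph V}
    (hG : MinCounterexample Ψ α β G) (hfc : ¬ HasForestCut G) {u w a b x y : V}
    (hu : ∀ z, G.Adj u z ↔ z = w ∨ z = a ∨ z = b ∨ z = x)
    (hw : ∀ z, G.Adj w z ↔ z = u ∨ z = a ∨ z = b ∨ z = y)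
    (hab : G.Adj a b) (hxw : x ≠ w) (hxa : x ≠ a) (hxb : x ≠ b) (hyu : y ≠ u) (hya : y ≠ a)
    (hyb : y ≠ b) (hb : 4 < vdeg G b) (hbx : ¬ G.Adj b x) (hby : ¬ G.Adj b y) : False := by
  classical
  have huw : G.Adj u w := (hu w).2 (by simp)
  have hua : G.Adj u a := (hu a).2 (by simp)
  have hub : G.Adj u b := (hu b).2 (by simp)
  have hux : G.Adj u x := (hu x).2 (by simp)
  have hwa : G.Adj w a := (hw a).2 (by simp)
  have hwb : G.Adj w b := (hw b).2 (by simp)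
  have hwy : G.Adj w y := (hw y).2 (by simp)
  -- A fifth neighbour of `b` shows that something remains on the far side of the cut.
  obtain ⟨z, hbz, hz⟩ : ∃ z, G.Adj b z ∧ z ∉ ({u, w, a} : Set V) := by
    by_contra! h
    have h1 := Set.ncard_le_ncard (s := G.neighborSet b) (t := ({u, w, a} : Set V)) h
      (Set.toFinite _)
    have h2 := Set.ncard_insert_le u ({w, a} : Set V)
    have h3 := Set.ncard_insert_le w ({a} : Set V)
    rw [Set.ncard_singleton] at h3
    unfold vdeg at hb
    omega
  simp only [Set.mem_insert_iff, Set.mem_singleton_iff, not_or] at hz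
  have hnd : ¬ Degen G {a, b, x, y} := by
    refine not_degen_of_sep hfc (L := {u, w}) (R := {a, b, x, y, u, w}ᶜ)
      ⟨⟨u, Or.inl rfl⟩, ⟨z, ?_⟩, ?_, ?_, ?_, ?_, ?_⟩
    · simp only [Set.mem_compl_iff, Set.mem_insert_iff, Set.mem_singleton_iff]
      rintro (rfl | rfl | rfl | rfl | rfl | rfl)
      · exact hz.2.2 rfl
      · exact hbz.ne rfl
      · exact hbx hbz
      · exact hby hbz
      · exact hz.1 rfl
      · exact hz.2.1 rfl
    · intro t
      simp only [Set.mem_compl_iff, Set.mem_insert_iff, Set.mem_singleton_iff, Set.mem_univ]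
      tauto
    · rintro t (rfl | rfl | rfl | rfl) (rfl | rfl)
      exacts [hua.ne rfl, hwa.ne rfl, hub.ne rfl, hwb.ne rfl, hux.ne rfl, hxw rfl, hyu rfl,
        hwy.ne rfl]
    · intro t ht
      simp only [Set.mem_compl_iff, Set.mem_insert_iff, Set.mem_singleton_iff] at ht ⊢
      tauto
    · intro t ht
      simp only [Set.mem_compl_iff, Set.mem_insert_iff, Set.mem_singleton_iff] at ht ⊢
      tauto
    · rintro t (rfl | rfl) s hs hts
      · have := (hu s).1 hts
        simp only [Set.mem_compl_iff, Set.mem_insert_iff, Set.mem_singleton_iff] at hs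
        tauto
      · have := (hw s).1 hts
        simp only [Set.mem_compl_iff, Set.mem_insert_iff, Set.mem_singleton_iff] at hs
        tauto
  obtain ⟨hax, hay, hxy⟩ : G.Adj a x ∧ G.Adj a y ∧ G.Adj x y := by
    unfold Degen at hnd
    push Not at hnd
    obtain ⟨T, hT, ⟨t, ht⟩, h⟩ := hnd
    have mem : ∀ s ∈ T, s = a ∨ s = b ∨ s = x ∨ s = y := fun s hs => by simpa using hT hs
    have hbT : b ∉ T := by
      intro hbT
      obtain ⟨s, hs, hbs, hsa⟩ := h b hbT a
      rcases mem s hs with rfl | rfl | rfl | rfl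
      exacts [hsa rfl, hbs.ne rfl, hbx hbs, hby hbs]
    have mem' : ∀ s ∈ T, s = a ∨ s = x ∨ s = y := fun s hs => by
      rcases mem s hs with rfl | rfl | rfl | rfl
      exacts [Or.inl rfl, absurd hs hbT, Or.inr (Or.inl rfl), Or.inr (Or.inr rfl)]
    have hall : ∀ s ∈ T, ∃ p q, p ∈ T ∧ q ∈ T ∧ G.Adj s p ∧ G.Adj s q ∧ p ≠ q := by
      intro s hs
      obtain ⟨p, hp, hsp, -⟩ := h s hs s
      obtain ⟨q, hq, hsq, hqp⟩ := h s hs p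
      exact ⟨p, q, hp, hq, hsp, hsq, hqp.symm⟩
    have hstep : ∀ s ∈ T, ∀ r, r = a ∨ r = x ∨ r = y → r ≠ s → r ∈ T ∧ G.Adj s r := by
      intro s hs r hr hrs
      obtain ⟨p, q, hp, hq, hsp, hsq, hpq⟩ := hall s hs
      have h1 := mem' s hs
      have h2 := mem' p hp
      have h3 := mem' q hq
      have h4 := hsp.ne
      have h5 := hsq.ne
      have : r = p ∨ r = q := by grind
      rcases this with rfl | rfl
      · exact ⟨hp, hsp⟩
      · exact ⟨hq, hsq⟩
    have haT : a ∈ T := by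
      by_cases hta : a = t
      · rwa [hta]
      · exact (hstep t ht a (by simp) hta).1
    have h1 := hstep a haT x (by simp) hxa
    have h2 := hstep a haT y (by simp) hya
    refine ⟨h1.2, h2.2, (hstep x h1.1 y (by simp) ?_).2⟩
    -- The vertex `x` has two neighbours in `T ⊆ {a, x, y}`, so `x ≠ y`.
    rintro rfl
    obtain ⟨p, q, hp, hq, hsp, hsq, hpq⟩ := hall y h1.1
    have h2 := mem' p hp
    have h3 := mem' q hq
    have h4 := hsp.ne
    have h5 := hsq.ne
    grind
  have hX4 : 4 ≤ ({u, w}ᶜ : Set V).ncard := by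
    have h4 : ({a, b, x, y} : Set V).ncard = 4 := by
      rw [Set.ncard_insert_of_notMem (by simp [hab.ne, hax.ne, hay.ne]),
        Set.ncard_insert_of_notMem (by simp [hxb.symm, hyb.symm]), Set.ncard_pair hxy.ne]
    rw [← h4]
    apply Set.ncard_le_ncard _ (Set.toFinite _)
    rintro t (rfl | rfl | rfl | rfl) (rfl | rfl)
    exacts [hua.ne rfl, hwa.ne rfl, hub.ne rfl, hwb.ne rfl, hux.ne rfl, hxw rfl, hyu rfl,
        hwy.ne rfl]
  have hne := And.intro huw.ne <| And.intro hua.ne <| And.intro hub.ne <| And.intro hux.ne <|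
    And.intro hwa.ne <| And.intro hwb.ne hwy.ne
  obtain ⟨M, L, R, hs, hM⟩ := exists_sep hΨ hα2 hG {u, w}ᶜ (G ⊔ edge x b)
    {s(u, w), s(u, a), s(u, b), s(u, x), s(w, a), s(w, b), s(w, y)} {s(x, b)} hX4
    (by rw [compl_compl, Set.ncard_pair huw.ne]; norm_num)
    (by simp [huw, hua, hub, hux, hwa, hwb, hwy])
    (by
      rintro x - y - (h | h)
      · exact Or.inl h
      · rw [edge_adj] at h
        right
        rcases h.1 with ⟨rfl, rfl⟩ | ⟨rfl, rfl⟩ <;> simp) (by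
      have h1 := hab.ne
      have h2 := hax.ne
      have h3 := hay.ne
      rw [compl_compl, Set.ncard_pair huw.ne, Finset.card_insert_of_notMem,
        Finset.card_insert_of_notMem, Finset.card_insert_of_notMem,
        Finset.card_insert_of_notMem, Finset.card_insert_of_notMem,
        Finset.card_insert_of_notMem] <;>
        simp only [Finset.card_singleton, Finset.mem_insert, Finset.mem_singleton, Sym2.eq_iff] <;>
        grind)
  by_cases hbR : b ∈ R
  · exact false_of_sep_twin hΨ hG hu hw hab hax hay hxy hxw hxb hyu M R L hs.symm hM
      fun hbL => hs.lr b hbL hbR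
  · exact false_of_sep_twin hΨ hG hu hw hab hax hay hxy hxw hxb hyu M L R hs hM hbR

/-! ### Extending an independent cut of the high-degree part -/

/-- An independent set together with vertices that are leaves in the union induces a forest. -/
lemma degen_of_leaves {V : Type} {G : SimpleGraph V} {S M : Set V}
    (hM : ∀ x ∈ M, ∀ y ∈ M, ¬ G.Adj x y)
    (hS : ∀ v ∈ S, v ∉ M → ∀ y ∈ S, ∀ z ∈ S, G.Adj v y → G.Adj v z → y = z) : Degen G S := by
  intro T hT hne
  by_cases h : ∃ v ∈ T, v ∉ M
  · obtain ⟨v, hv, hvM⟩ := h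
    by_cases h' : ∃ z ∈ T, G.Adj v z
    · obtain ⟨z, hz, hvz⟩ := h'
      exact ⟨v, hv, z, fun y hy hvy => hS v (hT hv) hvM y (hT hy) z (hT hz) hvy hvz⟩
    · exact ⟨v, hv, v, fun y hy hvy => absurd ⟨y, hy, hvy⟩ h'⟩
  · push Not at h
    obtain ⟨v, hv⟩ := hne
    exact ⟨v, hv, v, fun y hy hvy => absurd hvy (hM v (h v hv) y (h y hy))⟩

/-- The four neighbours of a vertex of degree 4, the first three being a prescribed triple. -/
lemma exists_fourth {V : Type} [Finite V] {G : SimpleGraph V} {v p q r : V} (hv : vdeg G v = 4)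
    (hp : G.Adj v p) (hq : G.Adj v q) (hr : G.Adj v r) (hpq : p ≠ q) (hpr : p ≠ r) (hqr : q ≠ r) :
    ∃ s, s ≠ p ∧ s ≠ q ∧ s ≠ r ∧ ∀ z, G.Adj v z ↔ z = p ∨ z = q ∨ z = r ∨ z = s := by
  have h3 : ({p, q, r} : Set V).ncard = 3 := by
    rw [Set.ncard_insert_of_notMem (by simp [hpq, hpr]), Set.ncard_pair hqr]
  have hsub : ({p, q, r} : Set V) ⊆ G.neighborSet v := by
    rintro x (rfl | rfl | rfl) <;> assumption
  have hd := Set.ncard_sdiff_add_ncard_of_subset hsub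
  have hv' : (G.neighborSet v).ncard = 4 := hv
  obtain ⟨s, hs⟩ := Set.ncard_eq_one.1 (show (G.neighborSet v \ {p, q, r}).ncard = 1 by omega)
  have mem : ∀ z, (G.Adj v z ∧ z ≠ p ∧ z ≠ q ∧ z ≠ r) ↔ z = s := by
    intro z
    rw [← Set.mem_singleton_iff, ← hs]
    simp
  have h := (mem s).2 rfl
  refine ⟨s, h.2.1, h.2.2.1, h.2.2.2, fun z => ⟨fun hz => ?_, ?_⟩⟩
  · have := (mem z).1
    tauto
  · rintro (rfl | rfl | rfl | rfl)
    exacts [hp, hq, hr, h.1]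

/-- A vertex `u` of degree 4 whose neighbourhood contains a triangle disjoint from `U` has at most one
neighbour in a set `S ⊆ M ∪ U`, provided that `u` has a neighbour in `L` and, moreover, a neighbour
in `R` or a partner in `U ∖ S`. Two neighbours in `S` would include the one outside the triangle, as
the triangle meets the independent set `M` at most once; then the neighbours of `u` in `L` and in
`R`, or the partner, lie on the triangle, which no edge between `L` and `R` and no vertex of `U`
allows. -/
lemma leaf_of_no_K4 {V : Type} [Finite V] {G : SimpleGraph V} {U M L R S : Set V}
    (hs : CutPart G Uᶜ M L R) (hMi : ∀ x ∈ M, ∀ y ∈ M, ¬ G.Adj x y) {u p q r : V}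
    (hu : vdeg G u = 4) (hup : G.Adj u p) (huq : G.Adj u q) (hur : G.Adj u r) (hpq : G.Adj p q)
    (hpr : G.Adj p r) (hqr : G.Adj q r) (hpU : p ∉ U) (hqU : q ∉ U) (hrU : r ∉ U)
    (hL : ∃ l ∈ L, G.Adj u l)
    (hC : (∃ t ∈ R, G.Adj u t) ∨ ∃ w ∈ U, G.Adj u w ∧ w ∉ S)
    (hS : ∀ z ∈ S, z ∈ M ∨ z ∈ U) {y z : V} (hy : y ∈ S) (hz : z ∈ S) (huy : G.Adj u y)
    (huz : G.Adj u z) : y = z := by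
  by_contra hyz
  obtain ⟨s, hsp, hsq, hsr, hNu⟩ := exists_fourth hu hup huq hur hpq.ne hpr.ne hqr.ne
  have cov : ∀ z, z ∉ U ↔ z ∈ M ∨ z ∈ L ∨ z ∈ R := hs.cover
  -- One of `y`, `z` is the fourth neighbour `s`, since `M` meets the triangle at most once.
  have hsS : s ∈ S := by
    have h1 := (hNu y).1 huy
    have h2 := (hNu z).1 huz
    have h3 := hS y hy
    have h4 := hS z hz
    have m1 := hMi p
    have m2 := hMi q
    have m3 := hMi r
    by_cases hys : y = s
    · exact hys ▸ hy
    by_cases hzs : z = s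
    · exact hzs ▸ hz
    exfalso
    have hyM : y ∈ M := h3.resolve_right (by rcases h1 with rfl | rfl | rfl | rfl <;> simp_all)
    have hzM : z ∈ M := h4.resolve_right (by rcases h2 with rfl | rfl | rfl | rfl <;> simp_all)
    have := hMi y hyM z hzM
    have := hMi z hzM y hyM
    rcases h1 with rfl | rfl | rfl | rfl <;> rcases h2 with rfl | rfl | rfl | rfl <;> simp_all
  have hsLR : s ∉ L ∧ s ∉ R := by
    have h1 := cov s
    have h2 := hs.ml s
    have h3 := hs.mr s
    have h4 := hS s hsS
    tauto
  have hnR : ∀ t ∈ ({p, q, r} : Set V), ∀ l ∈ ({p, q, r} : Set V), l ∈ L → t ∉ R := by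
    intro t ht l hl hlL htR
    have h1 := hs.nadj l hlL t htR
    have h2 := hs.lr l hlL
    rcases ht with rfl | rfl | rfl <;> rcases hl with rfl | rfl | rfl <;>
      first
        | exact h2 htR
        | (refine h1 ?_; assumption)
        | (refine h1 (SimpleGraph.Adj.symm ?_); assumption)
  have hmem : ∀ t, G.Adj u t → t ≠ s → t ∈ ({p, q, r} : Set V) := by
    intro t ht hts
    rcases (hNu t).1 ht with rfl | rfl | rfl | rfl
    exacts [by simp, by simp, by simp, absurd rfl hts]
  obtain ⟨l, hl, hul⟩ := hL
  have hl' := hmem l hul (by rintro rfl; exact hsLR.1 hl)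
  rcases hC with ⟨t, ht, hut⟩ | ⟨w, hwU, huw, hwS⟩
  · exact hnR t (hmem t hut (by rintro rfl; exact hsLR.2 ht)) l hl' hl ht
  · rcases hmem w huw (by rintro rfl; exact hwS hsS) with rfl | rfl | rfl
    exacts [hpU hwU, hqU hwU, hrU hwU]

/-- In a `K₄` formed by two degree-4 vertices `u`, `w` and two further vertices `a`, `b`, the
vertex `u` has at most one neighbour in a set `S ⊆ M ∪ U`, provided that `u` has a neighbour in `L`,
and one in `R` if `w` has one in `L`, and that `w`, when in `S`, has neighbours in both `L` and `R`.
Otherwise `w ∈ S`, one of `a`, `b` is in `M`, the other in one of the sides, and the fourth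
neighbours of `u` and `w` are in the opposite side, against `false_of_twin_K4`. -/
lemma leaf_of_K4 {Ψ : ∀ (W : Type), SimpleGraph W → Prop}
    (hΨ : Ψ = ForestClass ∨ Ψ = BipartiteClass) {α β : ℝ} (hα2 : α ≤ 3)
    (hβ : 4 * α - β = 6) {V : Type} [Fintype V] {G : SimpleGraph V}
    (hG : MinCounterexample Ψ α β G) (hfc : ¬ HasForestCut G) {U M L R S : Set V}
    (hUd : ∀ v, v ∈ U ↔ vdeg G v = 4)
    (hmatch : ∀ u ∈ U, ∀ w ∈ U, ∀ w' ∈ U, G.Adj u w → G.Adj u w' → w = w')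
    (hs : CutPart G Uᶜ M L R) (hMi : ∀ x ∈ M, ∀ y ∈ M, ¬ G.Adj x y) {u w a b : V}
    (huU : u ∈ U) (hwU : w ∈ U) (huw : G.Adj u w) (hua : G.Adj u a) (hub : G.Adj u b)
    (hwa : G.Adj w a) (hwb : G.Adj w b) (hab : G.Adj a b)
    (hLu : ∃ l ∈ L, G.Adj u l) (hRu : (∃ l ∈ L, G.Adj w l) → ∃ t ∈ R, G.Adj u t)
    (hLw : w ∈ S → ∃ l ∈ L, G.Adj w l)
    (hRw : w ∈ S → ∃ t ∈ R, G.Adj w t)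
    (hS : ∀ z ∈ S, z ∈ M ∨ z ∈ U) {y z : V} (hy : y ∈ S) (hz : z ∈ S) (huy : G.Adj u y)
    (huz : G.Adj u z) : y = z := by
  by_contra hyz
  have hdegb : ∀ b, b ∉ U → 4 < vdeg G b := fun b hb =>
    lt_of_le_of_ne (four_le_vdeg hΨ hα2 hβ hG hfc b) (fun h => hb ((hUd b).2 h.symm))
  obtain ⟨x, hxw, hxa, hxb, hNu⟩ :=
    exists_fourth ((hUd u).1 huU) huw hua hub hwa.ne hwb.ne hab.ne
  obtain ⟨v, hvu, hva, hvb, hNw⟩ :=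
    exists_fourth ((hUd w).1 hwU) huw.symm hwa hwb hua.ne hub.ne hab.ne
  have haU : a ∉ U := fun h => hwa.ne (hmatch u huU w hwU a h huw hua)
  have hbU : b ∉ U := fun h => hwb.ne (hmatch u huU w hwU b h huw hub)
  have hxU : x ∉ U := fun h => hxw (hmatch u huU w hwU x h huw ((hNu x).2 (by simp))).symm
  have key : ∀ a b, (∀ z, G.Adj u z ↔ z = w ∨ z = a ∨ z = b ∨ z = x) →
      (∀ z, G.Adj w z ↔ z = u ∨ z = a ∨ z = b ∨ z = v) → G.Adj a b → x ≠ a → x ≠ b → v ≠ a →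
      v ≠ b → b ∉ U → (b ∈ L ∧ x ∈ R ∧ v ∈ R ∨ b ∈ R ∧ x ∈ L ∧ v ∈ L) → False := by
    intro a b h1 h2 h3 h4 h5 h6 h7 h8 h9
    refine false_of_twin_K4 hΨ hα2 hG hfc h1 h2 h3 hxw h4 h5 hvu h6 h7 (hdegb b h8) ?_ ?_
    · rcases h9 with h9 | h9
      · exact hs.nadj b h9.1 x h9.2.1
      · exact fun h => hs.nadj x h9.2.1 b h9.1 h.symm
    · rcases h9 with h9 | h9
      · exact hs.nadj b h9.1 v h9.2.2
      · exact fun h => hs.nadj v h9.2.2 b h9.1 h.symm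
  have hLu' : a ∈ L ∨ b ∈ L ∨ x ∈ L := by
    have hwL := hs.cover w
    obtain ⟨l, hl, hul⟩ := hLu
    rcases (hNu l).1 hul with rfl | rfl | rfl | rfl
    · exact absurd hwU (hwL.2 (Or.inr (Or.inl hl)))
    exacts [Or.inl hl, Or.inr (Or.inl hl), Or.inr (Or.inr hl)]
  have noU : ∀ s ∈ U, s ∉ M ∧ s ∉ L ∧ s ∉ R :=
    fun s hsU => ⟨fun h => (hs.cover s).2 (Or.inl h) hsU,
      fun h => (hs.cover s).2 (Or.inr (Or.inl h)) hsU,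
      fun h => (hs.cover s).2 (Or.inr (Or.inr h)) hsU⟩
  have hRu' : a ∈ L ∨ b ∈ L → a ∈ R ∨ b ∈ R ∨ x ∈ R := by
    intro h
    obtain ⟨t, ht, hut⟩ := hRu (by
      rcases h with h | h
      exacts [⟨a, h, hwa⟩, ⟨b, h, hwb⟩])
    rcases (hNu t).1 hut with rfl | rfl | rfl | rfl
    · exact absurd ht (noU _ hwU).2.2
    exacts [Or.inl ht, Or.inr (Or.inl ht), Or.inr (Or.inr ht)]
  have hLw' : w ∈ S → a ∈ L ∨ b ∈ L ∨ v ∈ L := by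
    intro h
    obtain ⟨t, ht, hut⟩ := hLw h
    rcases (hNw t).1 hut with rfl | rfl | rfl | rfl
    · exact absurd ht (noU _ huU).2.1
    exacts [Or.inl ht, Or.inr (Or.inl ht), Or.inr (Or.inr ht)]
  have hRw' : w ∈ S → a ∈ R ∨ b ∈ R ∨ v ∈ R := by
    intro h
    obtain ⟨t, ht, hut⟩ := hRw h
    rcases (hNw t).1 hut with rfl | rfl | rfl | rfl
    · exact absurd ht (noU _ huU).2.2
    exacts [Or.inl ht, Or.inr (Or.inl ht), Or.inr (Or.inr ht)]
  have cov : ∀ z, z ∉ U ↔ z ∈ M ∨ z ∈ L ∨ z ∈ R := hs.cover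
  have ca := (cov a).1 haU
  have cb := (cov b).1 hbU
  have nab : ¬ (a ∈ M ∧ b ∈ M) := fun h => hMi a h.1 b h.2 hab
  have n1 : ¬ (a ∈ L ∧ b ∈ R) := fun h => hs.nadj a h.1 b h.2 hab
  have n2 : ¬ (b ∈ L ∧ a ∈ R) := fun h => hs.nadj b h.1 a h.2 hab.symm
  have da : (a ∈ M → a ∉ L ∧ a ∉ R) ∧ (a ∈ L → a ∉ R) :=
    ⟨fun h => ⟨hs.ml a h, hs.mr a h⟩, hs.lr a⟩
  have db : (b ∈ M → b ∉ L ∧ b ∉ R) ∧ (b ∈ L → b ∉ R) :=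
    ⟨fun h => ⟨hs.ml b h, hs.mr b h⟩, hs.lr b⟩
  have dx : (x ∈ M → x ∉ L ∧ x ∉ R) ∧ (x ∈ L → x ∉ R) :=
    ⟨fun h => ⟨hs.ml x h, hs.mr x h⟩, hs.lr x⟩
  -- The vertex `x` lies in a side, so the neighbours of `u` in `S` are `w` and one of `a`, `b`.
  have hxM : x ∉ M := by grind
  have hSM : ∀ t ∈ S, G.Adj u t → t = w ∨ (t = a ∧ a ∈ M) ∨ (t = b ∧ b ∈ M) := by
    intro t ht hut
    have h1 := hS t ht
    rcases (hNu t).1 hut with rfl | rfl | rfl | rfl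
    · exact Or.inl rfl
    all_goals grind
  have hres : w ∈ S ∧ (a ∈ M ∨ b ∈ M) := by
    rcases hSM y hy huy with rfl | ⟨rfl, h⟩ | ⟨rfl, h⟩ <;>
      rcases hSM z hz huz with rfl | ⟨rfl, h'⟩ | ⟨rfl, h'⟩ <;> grind
  have h3 := hLw' hres.1
  have h4 := hRw' hres.1
  rcases hres.2 with haM | hbM
  · exact key a b hNu hNw hab hxa hxb hva hvb hbU (by grind)
  · refine key b a ?_ ?_ hab.symm hxb hxa hvb hva haU (by grind)
    · exact fun s => (hNu s).trans (or_congr_right or_left_comm)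
    · exact fun s => (hNw s).trans (or_congr_right or_left_comm)

/-- The construction of the forest cut. A vertex of `U` without neighbour in `L` goes to the side
`R`. Any other vertex of `U` joins the cut if it has a neighbour in `R` or a partner that went
to `R`, and otherwise goes to the side `L`. -/
lemma false_of_cutPart {Ψ : ∀ (W : Type), SimpleGraph W → Prop}
    (hΨ : Ψ = ForestClass ∨ Ψ = BipartiteClass) {α β : ℝ} (hα2 : α ≤ 3)
    (hβ : 4 * α - β = 6) {V : Type} [Fintype V] {G : SimpleGraph V}
    (hG : MinCounterexample Ψ α β G) (hfc : ¬ HasForestCut G) {U M L R : Set V}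
    (hUd : ∀ v, v ∈ U ↔ vdeg G v = 4)
    (hmatch : ∀ u ∈ U, ∀ w ∈ U, ∀ w' ∈ U, G.Adj u w → G.Adj u w' → w = w')
    (hs : CutPart G Uᶜ M L R) (hMi : ∀ x ∈ M, ∀ y ∈ M, ¬ G.Adj x y) : False := by
  have cov : ∀ z, z ∉ U ↔ z ∈ M ∨ z ∈ L ∨ z ∈ R := hs.cover
  have hdisj : ∀ z, z ∈ U → z ∉ M ∧ z ∉ L ∧ z ∉ R := by
    intro z hz
    have := cov z
    tauto
  obtain ⟨TL, hTL⟩ : ∃ T : V → Prop, ∀ u, T u ↔ ∃ l ∈ L, G.Adj u l := ⟨_, fun _ => Iff.rfl⟩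
  obtain ⟨C, hC⟩ : ∃ C : V → Prop, ∀ u, C u ↔ TL u ∧ ((∃ t ∈ R, G.Adj u t) ∨
    ∃ w ∈ U, G.Adj u w ∧ ¬ TL w) := ⟨_, fun _ => Iff.rfl⟩
  refine not_degen_of_sep hfc (M := M ∪ {u | u ∈ U ∧ C u}) (L := L ∪ {u | u ∈ U ∧ TL u ∧ ¬ C u})
    (R := R ∪ {u | u ∈ U ∧ ¬ TL u})
    ⟨hs.left.mono Set.subset_union_left, hs.right.mono Set.subset_union_left, ?_, ?_, ?_, ?_, ?_⟩
    (degen_of_leaves hMi ?_)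
  · intro z
    have h1 := cov z
    have h2 := hC z
    simp only [Set.mem_univ, Set.mem_union, Set.mem_ofPred_eq, true_iff]
    by_cases hz : z ∈ U <;> by_cases hT : TL z <;> by_cases hc : C z <;> tauto
  · rintro z (hz | hz) (hz' | hz')
    exacts [hs.ml z hz hz', (hdisj z hz'.1).1 hz, (hdisj z hz.1).2.1 hz', hz'.2.2 hz.2]
  · rintro z (hz | hz) (hz' | hz')
    exacts [hs.mr z hz hz', (hdisj z hz'.1).1 hz, (hdisj z hz.1).2.2 hz',
      hz'.2 ((hC z).1 hz.2).1]
  · rintro z (hz | hz) (hz' | hz')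
    exacts [hs.lr z hz hz', (hdisj z hz'.1).2.1 hz, (hdisj z hz.1).2.2 hz', hz'.2 hz.2.1]
  · rintro x (hx | hx) y (hy | hy) hxy
    · exact hs.nadj x hx y hy hxy
    · exact hy.2 ((hTL y).2 ⟨x, hx, hxy.symm⟩)
    · exact hx.2.2 ((hC x).2 ⟨hx.2.1, Or.inl ⟨y, hy, hxy⟩⟩)
    · exact hx.2.2 ((hC x).2 ⟨hx.2.1, Or.inr ⟨y, hy.1, hxy, hy.2⟩⟩)
  rintro u (hu | ⟨huU, hCu⟩) huM y hy z hz huy huz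
  · exact absurd hu huM
  obtain ⟨huL, huC⟩ := (hC u).1 hCu
  have hS : ∀ z ∈ M ∪ {u | u ∈ U ∧ C u}, z ∈ M ∨ z ∈ U := by
    rintro z (hz | hz)
    exacts [Or.inl hz, Or.inr hz.1]
  have hSC : ∀ w ∈ U, w ∈ M ∪ {u | u ∈ U ∧ C u} → C w := by
    rintro w hwU (hw | hw)
    exacts [absurd hw (hdisj w hwU).1, hw.2]
  by_cases hK : ∃ w ∈ U, ∃ a b, G.Adj u w ∧ G.Adj u a ∧ G.Adj u b ∧ G.Adj w a ∧ G.Adj w b ∧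
      G.Adj a b
  · obtain ⟨w, hwU, a, b, huw, hua, hub, hwa, hwb, hab⟩ := hK
    refine leaf_of_K4 hΨ hα2 hβ hG hfc hUd hmatch hs hMi huU hwU huw hua hub hwa hwb hab
      ((hTL u).1 huL) ?_ ?_ ?_ hS hy hz huy huz
    · intro hw
      rcases huC with h | ⟨w', hw'U, huw', hw'⟩
      · exact h
      · obtain rfl := hmatch u huU w hwU w' hw'U huw huw'
        exact absurd ((hTL w).2 hw) hw'
    · exact fun hw => (hTL w).1 ((hC w).1 (hSC w hwU hw)).1
    · intro hw
      rcases ((hC w).1 (hSC w hwU hw)).2 with h | ⟨u', hu'U, hwu', hu'⟩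
      · exact h
      · obtain rfl := hmatch w hwU u huU u' hu'U huw.symm hwu'
        exact absurd huL hu'
  · obtain ⟨p, q, r, hup, huq, hur, hpq, hpr, hqr⟩ :=
      exists_triangle hΨ hα2 hβ hG hfc ((hUd u).1 huU)
    have hpU : p ∉ U := fun h => hK ⟨p, h, q, r, hup, huq, hur, hpq, hpr, hqr⟩
    have hqU : q ∉ U := fun h => hK ⟨q, h, p, r, huq, hup, hur, hpq.symm, hqr, hpr⟩
    have hrU : r ∉ U := fun h => hK ⟨r, h, p, q, hur, hup, huq, hpr.symm, hqr.symm, hpq⟩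
    refine leaf_of_no_K4 hs hMi ((hUd u).1 huU) hup huq hur hpq hpr hqr hpU hqU hrU
      ((hTL u).1 huL) ?_ hS hy hz huy huz
    rcases huC with h | ⟨w, hwU, huw, hw⟩
    · exact Or.inl h
    · exact Or.inr ⟨w, hwU, huw, fun h => hw ((hC w).1 (hSC w hwU h)).1⟩

/-- in a minimal counterexample, if the degree-4 vertices `U` induce
a graph of maximum degree at most 1 and `G[V∖U]` has an independent cut,
then `G` has a forest cut. -/
theorem stmt16 (Ψ : ∀ (W : Type), SimpleGraph W → Prop)
    (hΨ : Ψ = ForestClass ∨ Ψ = BipartiteClass)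
    (α β : ℝ) (hα1 : 2 < α) (hα2 : α ≤ 3) (hβ : 4 * α - β = 6)
    {V : Type} [Fintype V] (G : SimpleGraph V) (hG : MinCounterexample Ψ α β G)
    (hU : ∀ v : ↥{v : V | vdeg G v = 4},
      vdeg (G.induce {v : V | vdeg G v = 4}) v ≤ 1)
    (hind : HasIndependentCut (G.induce ({v : V | vdeg G v = 4}ᶜ))) :
    HasForestCut G := by
  by_contra hfc
  obtain ⟨M, hM, hindep⟩ := hind
  obtain ⟨L, R, hs⟩ := sep_of_isVertexCut hM
  refine false_of_cutPart hΨ hα2 hβ hG hfc (fun v => Iff.rfl) ?_ hs ?_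
  · intro u hu w hw w' hw' h h'
    have := (Set.ncard_le_one (Set.toFinite _)).1 (hU ⟨u, hu⟩) ⟨w, hw⟩ h ⟨w', hw'⟩ h'
    exact congrArg Subtype.val this
  · rintro _ ⟨x, hx, rfl⟩ _ ⟨y, hy, rfl⟩ hxy
    exact hindep x hx y hy hxy
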